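/- For every δ > 0 and every ε > 0 there exists q₀ such that for every prime power q ≥ q₀ and every real p with 1/q ≤ p ≤ q^{−4δ}, a p-random subset Q of F² satisfies a(Q) ≤ q^{1 + 2δ} · p^{1/2} with probability at least 1 − ε. -/

import Mathlib

/-!
Let `q` be the number of elements of `F` and fix a small arc `S` of size `s`. Call two points
adjacent if they are collinear with a third point of `S`, so that every arc containing `S` is an
independent set. Among more than `8 * q` points, Cauchy–Schwarz applied to the `q + 1` lines through
each point of `S` gives many collinear pairs, and the line through a given pair meets the arc `S` at
most twice, so the graph has edge density of order `s / q`. The Kleitman–Winston algorithm then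
covers the arcs containing `S` by `(q ^ 2 + 1) ^ t` sets of size `8 * q + t`, as soon as
`8 * q * log q ≤ s * t`. Taking `s = t` close to `q ^ (1 / 2 + δ)`, there are at most
`q ^ (5 * s) * (9 * q).choose m` arcs of size `m`. If `q ^ (1 + 2 * δ) * p ^ (1 / 2) ≤ m` and
`1 / q ≤ p`, then `m` dominates both `q * p` and `s * log q`, so the expected number of `m`-arcs in
the random set is at most `exp (-m / 2)`.
-/

open Finset MeasureTheory
open scoped NNReal ENNReal

/-- A set `P` in the affine plane over `F` is an arc if it contains no three
distinct collinear points. -/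
def IsArc (F : Type*) [Field F] (P : Set (F × F)) : Prop :=
  ∀ a ∈ P, ∀ b ∈ P, ∀ c ∈ P,
    a ≠ b → a ≠ c → b ≠ c → ¬ Collinear F ({a, b, c} : Set (F × F))

/-- `numArcs F k` is the number of `k`-element arcs in `F²`. -/
noncomputable def numArcs (F : Type*) [Field F] [Fintype F] (k : ℕ) : ℕ :=
  Nat.card {s : Finset (F × F) // s.card = k ∧ IsArc F ↑s}

/-- `maxArc F P` is the maximum cardinality of an arc contained in `P`. -/
noncomputable def maxArc (F : Type*) [Field F] (P : Finset (F × F)) : ℕ :=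
  sSup {k : ℕ | ∃ s : Finset (F × F), s ⊆ P ∧ s.card = k ∧ IsArc F ↑s}

/-- `numCollinearTriples F P` is the number of 3-element collinear subsets of `P`. -/
noncomputable def numCollinearTriples (F : Type*) [Field F] (P : Finset (F × F)) : ℕ :=
  Nat.card {s : Finset (F × F) // s ⊆ P ∧ s.card = 3 ∧ Collinear F (↑s : Set (F × F))}

/-- `P` contains no `l` distinct collinear points. -/
def NoLCollinear (F : Type*) [Field F] (l : ℕ) (P : Finset (F × F)) : Prop :=
  ∀ s : Finset (F × F), s ⊆ P → s.card = l → ¬ Collinear F (↑s : Set (F × F))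

/-- The product Bernoulli(p) measure on subsets of `F²` (encoded as functions
`F × F → Bool`): each point is included independently with probability `p`. -/
noncomputable def randomMeasure (F : Type*) [Field F] [Fintype F] (p : ℝ≥0) (hp : p ≤ 1) :
    Measure ((F × F) → Bool) :=
  Measure.pi fun _ => (PMF.bernoulli p (by exact_mod_cast hp)).toMeasure

/-- The subset of `F²` corresponding to an indicator function `Q : F × F → Bool`. -/
noncomputable def toSubset {F : Type*} [Field F] [Fintype F] (Q : (F × F) → Bool) :
    Finset (F × F) := Finset.univ.filter fun x => Q x = true

/-- `L` is an affine line in `F²`, i.e. the affine span of two distinct points. -/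
def IsAffineLine (F : Type*) [Field F] (L : Set (F × F)) : Prop :=
  ∃ a b : F × F, a ≠ b ∧ L = (affineSpan F {a, b} : Set (F × F))

open Filter

lemma sq_card_le_card_mul_card_filter_eq {α β : Type*} [DecidableEq β] {f : α → β}
    {s : Finset α} {t : Finset β} (hf : ∀ x ∈ s, f x ∈ t) :
    #s ^ 2 ≤ #t * #{z ∈ s ×ˢ s | f z.1 = f z.2} := by
  have hfibre (b : β) :
      #{z ∈ {z ∈ s ×ˢ s | f z.1 = f z.2} | f z.1 = b} = #{x ∈ s | f x = b} ^ 2 := by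
    rw [sq, ← card_product]
    congr 1
    grind
  calc #s ^ 2 = (∑ b ∈ t, #{x ∈ s | f x = b}) ^ 2 := by rw [← card_eq_sum_card_fiberwise hf]
    _ ≤ #t * ∑ b ∈ t, #{x ∈ s | f x = b} ^ 2 := sq_sum_le_card_mul_sum_sq
    _ = #t * #{z ∈ s ×ˢ s | f z.1 = f z.2} := by
      rw [card_eq_sum_card_fiberwise (f := fun z : α × α => f z.1) (t := t) (by grind [Set.MapsTo])]
      simp only [hfibre]

section AffinePencil

variable {K V P : Type*} [DivisionRing K] [AddCommGroup V] [Module K V] [AddTorsor V P]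

lemma collinear_of_span_vsub_eq {s x y : P} (h : K ∙ (x -ᵥ s) = K ∙ (y -ᵥ s)) :
    Collinear K {s, x, y} := by
  obtain ⟨r, hr⟩ : ∃ r : K, r • (x -ᵥ s) = y -ᵥ s :=
    Submodule.mem_span_singleton.mp (h ▸ Submodule.mem_span_singleton_self (y -ᵥ s))
  refine (collinear_iff_of_mem (p₀ := s) (by simp)).mpr ⟨x -ᵥ s, ?_⟩
  rintro p (rfl | rfl | rfl)
  · exact ⟨0, by simp⟩
  · exact ⟨1, by simp⟩
  · exact ⟨r, by simp [hr]⟩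

open scoped Classical LinearAlgebra.Projectivization in
/-- The lines through `s` are indexed by the projectivization of the direction space. -/
lemma sq_card_le_card_projectivization_mul [Finite (ℙ K V)] {s : P} {R : Finset P} (hs : s ∉ R) :
    #R ^ 2 ≤ Nat.card (ℙ K V) * #{z ∈ R ×ˢ R | Collinear K {s, z.1, z.2}} := by
  have := Fintype.ofFinite (ℙ K V)
  have hmaps : ∀ x ∈ R, K ∙ (x -ᵥ s) ∈
      univ.image (Projectivization.submodule (K := K) (V := V)) := by
    intro x hx
    have hne : x -ᵥ s ≠ 0 := vsub_ne_zero.mpr fun h => hs (h ▸ hx)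
    exact mem_image.mpr ⟨.mk K _ hne, mem_univ _, Projectivization.submodule_mk _ hne⟩
  refine (sq_card_le_card_mul_card_filter_eq hmaps).trans ?_
  gcongr with z
  · rw [Nat.card_eq_fintype_card]
    exact card_image_le
  · exact collinear_of_span_vsub_eq

end AffinePencil

section Containers

variable {V : Type*} {G : SimpleGraph V} {P : Finset V}

lemma exists_card_interedges_le_card_mul_degree [DecidableRel G.Adj] (hP : P.Nonempty) :
    ∃ v ∈ P, #(G.interedges P P) ≤ #P * #{y ∈ P | G.Adj v y} := by
  have hcard : #(G.interedges P P) = ∑ v ∈ P, #{y ∈ P | G.Adj v y} := by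
    simp only [SimpleGraph.interedges_def, card_filter, sum_product]
  obtain ⟨v, hv, hmax⟩ := exists_max_image P (fun v => #{y ∈ P | G.Adj v y}) hP
  exact ⟨v, hv, hcard ▸ sum_le_card_nsmul P _ _ hmax⟩

/-- A family `𝓕` of vertex sets is a container family for the graph `G` on `P` if every
independent set of `G` inside `P` lies in a member of `𝓕`. -/
def IsContainerFamily (G : SimpleGraph V) (P : Finset V) (𝓕 : Finset (Finset V)) : Prop :=
  ∀ I ⊆ P, G.IsIndepSet (I : Set V) → ∃ C ∈ 𝓕, I ⊆ C

variable [DecidableRel G.Adj]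

lemma IsContainerFamily.union_image_insert [DecidableEq V] {v : V} {𝓕₁ 𝓕₂ : Finset (Finset V)}
    (h₁ : IsContainerFamily G (P.erase v) 𝓕₁)
    (h₂ : IsContainerFamily G {y ∈ P.erase v | ¬ G.Adj v y} 𝓕₂) :
    IsContainerFamily G P (𝓕₁ ∪ 𝓕₂.image (insert v)) := by
  intro I hIP hI
  by_cases hv : v ∈ I
  · have hsub : I.erase v ⊆ {y ∈ P.erase v | ¬ G.Adj v y} := by
      intro y hy
      obtain ⟨hyv, hyI⟩ := mem_erase.mp hy
      exact mem_filter.mpr ⟨mem_erase.mpr ⟨hyv, hIP hyI⟩, hI hv hyI hyv.symm⟩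
    obtain ⟨C, hC, hIC⟩ := h₂ _ hsub (hI.mono (coe_subset.mpr (erase_subset v I)))
    exact ⟨insert v C, mem_union_right _ (mem_image_of_mem _ hC), subset_insert_iff.mpr hIC⟩
  · obtain ⟨C, hC, hIC⟩ := h₁ I (subset_erase.mpr ⟨hIP, hv⟩) hI
    exact ⟨C, mem_union_left _ hC, hIC⟩

lemma card_nonneighbors_le [DecidableEq V] {v : V} {β : ℝ} (hv : β * #P ≤ #{y ∈ P | G.Adj v y}) :
    (#{y ∈ P.erase v | ¬ G.Adj v y} : ℝ) ≤ (1 - β) * #P := by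
  have hsub : #{y ∈ P.erase v | ¬ G.Adj v y} ≤ #{y ∈ P | ¬ G.Adj v y} :=
    card_le_card (filter_subset_filter _ (erase_subset v P))
  have hsplit : #{y ∈ P | G.Adj v y} + #{y ∈ P | ¬ G.Adj v y} = #P :=
    card_filter_add_card_filter_not _
  have : (#{y ∈ P.erase v | ¬ G.Adj v y} : ℝ) + #{y ∈ P | G.Adj v y} ≤ #P := by
    exact_mod_cast (by omega)
  linarith

/-- The **Kleitman–Winston lemma**. Branch on a vertex `v` of large degree in `P`: an independent
set that contains `v` lies in the non-neighbourhood of `v`, which is smaller by the factor `1 - β`,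
so this branch is taken at most `t` times. -/
lemma exists_isContainerFamily {β : ℝ} {k : ℕ}
    (hdeg : ∀ P : Finset V, k < #P → ∃ v ∈ P, β * #P ≤ #{y ∈ P | G.Adj v y}) (P : Finset V)
    (t : ℕ) (ht : (1 - β) ^ t * #P ≤ k) :
    ∃ 𝓕, IsContainerFamily G P 𝓕 ∧ #𝓕 ≤ (#P + 1) ^ t ∧ ∀ C ∈ 𝓕, #C ≤ k + t := by
  classical
  induction P using Finset.strongInduction generalizing t with
  | H P ih =>
  obtain hk | hk := le_or_gt #P k
  · exact ⟨{P}, fun I hI _ => ⟨P, by simp, hI⟩, by simpa using Nat.one_le_pow _ _ (by omega),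
      by simpa using by omega⟩
  obtain ⟨v, hv, hvdeg⟩ := hdeg P hk
  obtain _ | t := t
  · exact absurd ht (by simpa using hk)
  set N := {y ∈ P.erase v | ¬ G.Adj v y}
  have herase : #(P.erase v) + 1 = #P := card_erase_add_one hv
  have hNcard : #N ≤ #(P.erase v) := card_filter_le _ _
  have hβ : 0 ≤ 1 - β :=
    nonneg_of_mul_nonneg_left ((Nat.cast_nonneg _).trans (card_nonneighbors_le hvdeg))
      (by exact_mod_cast (by omega : 0 < #P))
  obtain ⟨𝓕₁, hcont₁, hcard₁, hsize₁⟩ := ih (P.erase v) (erase_ssubset hv) (t + 1) <| by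
    refine le_trans ?_ ht
    gcongr
    exact erase_subset v P
  obtain ⟨𝓕₂, hcont₂, hcard₂, hsize₂⟩ :=
    ih N ((filter_subset _ _).trans_ssubset (erase_ssubset hv)) t <| by
      refine le_trans ?_ ht
      rw [pow_succ, mul_assoc]
      gcongr
      exact card_nonneighbors_le hvdeg
  refine ⟨𝓕₁ ∪ 𝓕₂.image (insert v), hcont₁.union_image_insert hcont₂, ?_, ?_⟩
  · calc #(𝓕₁ ∪ 𝓕₂.image (insert v)) ≤ #𝓕₁ + #𝓕₂ :=
          (card_union_le _ _).trans (Nat.add_le_add_left card_image_le _)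
      _ ≤ #P ^ (t + 1) + #P ^ t := by
          rw [← herase]
          exact Nat.add_le_add hcard₁ (hcard₂.trans (by gcongr))
      _ = #P ^ t * (#P + 1) := by ring
      _ ≤ (#P + 1) ^ t * (#P + 1) := by gcongr; omega
      _ = (#P + 1) ^ (t + 1) := (pow_succ _ _).symm
  · intro C hC
    obtain hC | hC := mem_union.mp hC
    · exact hsize₁ C hC
    · obtain ⟨D, hD, rfl⟩ := mem_image.mp hC
      have := hsize₂ D hD
      have := card_insert_le v D
      omega

end Containers

section Arcs

variable {F : Type*} [Field F]

lemma IsArc.mono {A B : Set (F × F)} (hB : IsArc F B) (h : A ⊆ B) : IsArc F A :=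
  fun a ha b hb c hc => hB a (h ha) b (h hb) c (h hc)

/-- The secant graph of a point set `S`, in which two points are adjacent if they are distinct and
collinear with a third point of `S`. An arc containing `S` is an independent set of it. -/
def secantGraph (S : Finset (F × F)) : SimpleGraph (F × F) where
  Adj x y := x ≠ y ∧ ∃ s ∈ S, s ≠ x ∧ s ≠ y ∧ Collinear F {s, x, y}
  symm := ⟨by
    rintro x y ⟨hxy, s, hs, hsx, hsy, hcol⟩
    exact ⟨hxy.symm, s, hs, hsy, hsx, by rwa [Set.pair_comm]⟩⟩
  loopless := ⟨fun _ h => h.1 rfl⟩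

lemma IsArc.isIndepSet_secantGraph {S A : Finset (F × F)} (hA : IsArc F A) (hSA : S ⊆ A) :
    (secantGraph S).IsIndepSet (A : Set (F × F)) := by
  rintro x hx y hy - ⟨hxy, s, hs, hsx, hsy, hcol⟩
  exact hA s (hSA hs) x hx y hy hsx hsy hxy hcol

open scoped Classical in
lemma IsArc.card_filter_collinear_le_two {S : Finset (F × F)} (hS : IsArc F S) {x y : F × F}
    (hxy : x ≠ y) : #{s ∈ S | Collinear F {s, x, y}} ≤ 2 := by
  by_contra! h
  obtain ⟨a, b, c, ha, hb, hc, hab, hac, hbc⟩ := two_lt_card_iff.mp h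
  have hline {s : F × F} (hs : s ∈ {s ∈ S | Collinear F {s, x, y}}) : s ∈ line[F, x, y] :=
    (mem_filter.mp hs).2.mem_affineSpan_of_mem_of_ne (by simp) (by simp) (by simp) hxy
  have hmem {s : F × F} (hs : s ∈ {s ∈ S | Collinear F {s, x, y}}) : s ∈ (S : Set (F × F)) :=
    mem_of_mem_filter s hs
  exact hS a (hmem ha) b (hmem hb) c (hmem hc) hab hac hbc
    (collinear_triple_of_mem_affineSpan_pair (hline ha) (hline hb) (hline hc))

variable [Fintype F]

open scoped Classical in
lemma sq_card_le_mul_card_filter_collinear {s : F × F} {R : Finset (F × F)} (hs : s ∉ R) :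
    #R ^ 2 ≤ (Fintype.card F + 1) * (#{z ∈ R.offDiag | Collinear F {s, z.1, z.2}} + #R) := by
  have hlines : Nat.card (Projectivization F (F × F)) = Fintype.card F + 1 := by
    rw [Projectivization.card_of_finrank_two F (F × F) (by simp), Nat.card_eq_fintype_card]
  have hsub : {z ∈ R ×ˢ R | Collinear F {s, z.1, z.2}} ⊆
      {z ∈ R.offDiag | Collinear F {s, z.1, z.2}} ∪ R.diag := by grind
  calc #R ^ 2 ≤ (Fintype.card F + 1) * #{z ∈ R ×ˢ R | Collinear F {s, z.1, z.2}} :=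
        hlines ▸ sq_card_le_card_projectivization_mul hs
    _ ≤ (Fintype.card F + 1) * (#{z ∈ R.offDiag | Collinear F {s, z.1, z.2}} + #R) := by
        gcongr
        exact (card_le_card hsub).trans ((card_union_le _ _).trans_eq (by rw [diag_card]))

open scoped Classical in
lemma sq_card_le_mul_card_collinear_erase (s : F × F) {P : Finset (F × F)}
    (hP : 8 * Fintype.card F < #P) :
    #P ^ 2 ≤
      4 * Fintype.card F * #{z ∈ (P.erase s).offDiag | Collinear F {s, z.1, z.2}} := by
  have hpencil := sq_card_le_mul_card_filter_collinear (notMem_erase s P)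
  have hPR : #P ≤ #(P.erase s) + 1 := Nat.sub_le_iff_le_add.mp pred_card_le_card_erase
  have hq : 2 ≤ Fintype.card F := Fintype.one_lt_card
  generalize #{z ∈ (P.erase s).offDiag | Collinear F {s, z.1, z.2}} = e at *
  generalize #(P.erase s) = r at *
  generalize Fintype.card F = q at *
  have hre : 3 * r ^ 2 ≤ 8 * q * e := by nlinarith [show 8 * q ≤ r by omega]
  have hPr : 2 * #P ^ 2 ≤ 3 * r ^ 2 := by nlinarith
  linarith

open scoped Classical in
/-- The pencils at the points of an arc `S` count every pair of points at most twice, so the number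
of edges of the secant graph grows linearly with `#S`. -/
lemma IsArc.card_mul_sq_card_le_card_interedges {S : Finset (F × F)} (hS : IsArc F S)
    {P : Finset (F × F)} (hP : 8 * Fintype.card F < #P) :
    #S * #P ^ 2 ≤ 8 * Fintype.card F * #((secantGraph S).interedges P P) := by
  set E := (secantGraph S).interedges P P
  let r (s : F × F) (z : (F × F) × (F × F)) : Prop := Collinear F {s, z.1, z.2}
  have habove : ∀ s ∈ S, #P ^ 2 ≤ 4 * Fintype.card F * #(E.bipartiteAbove r s) := by
    intro s hs
    refine (sq_card_le_mul_card_collinear_erase s hP).trans ?_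
    gcongr
    intro z hz
    simp only [mem_filter, mem_offDiag, mem_erase] at hz
    obtain ⟨⟨⟨hxs, hx⟩, ⟨hys, hy⟩, hxy⟩, hcol⟩ := hz
    exact (mem_bipartiteAbove r).mpr ⟨(secantGraph S).mem_interedges_iff.mpr
      ⟨hx, hy, hxy, s, hs, hxs.symm, hys.symm, hcol⟩, hcol⟩
  have hbelow : ∀ z ∈ E, #(S.bipartiteBelow r z) ≤ 2 := fun z hz =>
    hS.card_filter_collinear_le_two ((secantGraph S).mem_interedges_iff.mp hz).2.2.ne
  calc #S * #P ^ 2 ≤ ∑ s ∈ S, 4 * Fintype.card F * #(E.bipartiteAbove r s) :=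
        card_nsmul_le_sum _ _ _ habove
    _ = 4 * Fintype.card F * ∑ z ∈ E, #(S.bipartiteBelow r z) := by
        rw [← mul_sum, sum_card_bipartiteAbove_eq_sum_card_bipartiteBelow]
    _ ≤ 4 * Fintype.card F * (#E * 2) := by
        gcongr
        exact sum_le_card_nsmul _ _ _ hbelow
    _ = 8 * Fintype.card F * #E := by ring

open scoped Classical in
lemma IsArc.exists_le_degree_secantGraph {S : Finset (F × F)} (hS : IsArc F S)
    {P : Finset (F × F)} (hP : 8 * Fintype.card F < #P) :
    ∃ v ∈ P, (#S : ℝ) / (8 * Fintype.card F) * #P ≤ #{y ∈ P | (secantGraph S).Adj v y} := by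
  have hP0 : 0 < #P := by omega
  obtain ⟨v, hv, hdeg⟩ :=
    exists_card_interedges_le_card_mul_degree (G := secantGraph S) (card_pos.mp hP0)
  refine ⟨v, hv, ?_⟩
  have hmul : #P * (#S * #P) ≤
      #P * (8 * Fintype.card F * #{y ∈ P | (secantGraph S).Adj v y}) := by
    linarith [hS.card_mul_sq_card_le_card_interedges hP,
      Nat.mul_le_mul_left (8 * Fintype.card F) hdeg]
  have hq : (0 : ℝ) < 8 * Fintype.card F := by exact_mod_cast (by simp [Fintype.card_pos])
  rw [div_mul_eq_mul_div, div_le_iff₀' hq]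
  exact_mod_cast Nat.le_of_mul_le_mul_left hmul hP0

open scoped Classical in
lemma numArcs_eq_card_filter (k : ℕ) :
    numArcs F k = #{A : Finset (F × F) | #A = k ∧ IsArc F A} := by
  rw [numArcs, Nat.card_eq_fintype_card, Fintype.card_subtype]

open scoped Classical in
lemma IsArc.card_filter_superset_le {S : Finset (F × F)} (hS : IsArc F S) {t : ℕ} (m : ℕ)
    (ht : (1 - (#S : ℝ) / (8 * Fintype.card F)) ^ t * (Fintype.card F : ℝ) ^ 2 ≤
      8 * Fintype.card F) :
    #{A : Finset (F × F) | (#A = m ∧ IsArc F A) ∧ S ⊆ A} ≤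
      (Fintype.card F ^ 2 + 1) ^ t * (8 * Fintype.card F + t).choose m := by
  have hplane : #(univ : Finset (F × F)) = Fintype.card F ^ 2 := by
    rw [card_univ, Fintype.card_prod, sq]
  obtain ⟨𝓕, hcont, hcard, hsize⟩ := exists_isContainerFamily
    (fun _ hP => hS.exists_le_degree_secantGraph hP) univ t (by rw [hplane]; push_cast; exact ht)
  have hsub : ({A | (#A = m ∧ IsArc F A) ∧ S ⊆ A} : Finset (Finset (F × F))) ⊆
      𝓕.biUnion (powersetCard m) := by
    intro A hA
    obtain ⟨⟨hAm, hA⟩, hSA⟩ := (mem_filter.mp hA).2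
    obtain ⟨C, hC, hAC⟩ := hcont A (subset_univ A) (hA.isIndepSet_secantGraph hSA)
    exact mem_biUnion.mpr ⟨C, hC, mem_powersetCard.mpr ⟨hAC, hAm⟩⟩
  refine (card_le_card hsub).trans ((card_biUnion_le_card_mul _ _ _ fun C hC => ?_).trans
    (Nat.mul_le_mul_right _ (hplane ▸ hcard)))
  rw [card_powersetCard]
  exact Nat.choose_le_choose m (hsize C hC)

lemma numArcs_le_sq_card_pow (k : ℕ) : numArcs F k ≤ (Fintype.card F ^ 2) ^ k := by
  classical
  calc numArcs F k ≤ #(powersetCard k (univ : Finset (F × F))) := by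
        rw [numArcs_eq_card_filter]
        exact card_le_card fun A hA =>
          mem_powersetCard.mpr ⟨subset_univ A, (mem_filter.mp hA).2.1⟩
    _ ≤ (Fintype.card F ^ 2) ^ k := by
        rw [card_powersetCard, card_univ, Fintype.card_prod, ← sq]
        exact Nat.choose_le_pow _ _

lemma numArcs_le_mul_choose {s t m : ℕ} (hsm : s ≤ m)
    (ht : (1 - (s : ℝ) / (8 * Fintype.card F)) ^ t * (Fintype.card F : ℝ) ^ 2 ≤
      8 * Fintype.card F) :
    numArcs F m ≤ (Fintype.card F ^ 2) ^ s *
      ((Fintype.card F ^ 2 + 1) ^ t * (8 * Fintype.card F + t).choose m) := by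
  classical
  have hsub : ({A | #A = m ∧ IsArc F A} : Finset (Finset (F × F))) ⊆
      ({S | #S = s ∧ IsArc F S} : Finset (Finset (F × F))).biUnion
        fun S => {A | (#A = m ∧ IsArc F A) ∧ S ⊆ A} := by
    intro A hA
    obtain ⟨hAm, hA⟩ := (mem_filter.mp hA).2
    obtain ⟨S, hSA, hSs⟩ := exists_subset_card_eq (hsm.trans hAm.ge)
    simp only [mem_biUnion, mem_filter, mem_univ, true_and]
    exact ⟨S, ⟨hSs, hA.mono (coe_subset.mpr hSA)⟩, ⟨hAm, hA⟩, hSA⟩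
  rw [numArcs_eq_card_filter]
  refine (card_le_card hsub).trans ((card_biUnion_le_card_mul _ _ _ fun S hSmem => ?_).trans
    (Nat.mul_le_mul_right _ (numArcs_eq_card_filter (F := F) s ▸ numArcs_le_sq_card_pow s)))
  obtain ⟨-, rfl, hS⟩ := mem_filter.mp hSmem
  exact hS.card_filter_superset_le m ht

end Arcs

section Estimates

/-- The case `s = t` of the container condition in `numArcs_le_mul_choose`. -/
lemma one_sub_div_pow_mul_sq_le {x : ℝ} {s : ℕ} (hx : 0 < x) (hsx : s ≤ 8 * x)
    (hlog : 8 * x * Real.log x ≤ s ^ 2) : (1 - s / (8 * x)) ^ s * x ^ 2 ≤ 8 * x := by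
  have hbase : 0 ≤ 1 - s / (8 * x) := sub_nonneg.mpr ((div_le_one (by positivity)).mpr hsx)
  have hpow : (1 - s / (8 * x)) ^ s ≤ x⁻¹ := by
    calc (1 - s / (8 * x)) ^ s ≤ Real.exp (-(s / (8 * x))) ^ s := by
          gcongr
          exact Real.one_sub_le_exp_neg _
      _ = Real.exp (-(s ^ 2 / (8 * x))) := by
          rw [← Real.exp_nat_mul]
          ring_nf
      _ ≤ Real.exp (-Real.log x) := by
          gcongr
          rwa [le_div_iff₀' (by positivity)]
      _ = x⁻¹ := by rw [Real.exp_neg, Real.exp_log hx]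
  calc (1 - s / (8 * x)) ^ s * x ^ 2 ≤ x⁻¹ * x ^ 2 := by gcongr
    _ = x := by field_simp
    _ ≤ 8 * x := by linarith

lemma choose_mul_pow_le_exp_neg {n m : ℕ} {p : ℝ} (hp : 0 ≤ p) (h : Real.exp 2 * (n * p) ≤ m) :
    n.choose m * p ^ m ≤ Real.exp (-m) := by
  have hbase : n * p ≤ Real.exp (-2) * m := by
    rwa [Real.exp_neg, ← div_eq_inv_mul, le_div_iff₀' (Real.exp_pos 2)]
  calc n.choose m * p ^ m ≤ (n : ℝ) ^ m / m.factorial * p ^ m := by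
        gcongr
        exact Nat.choose_le_pow_div m n
    _ = (n * p) ^ m / m.factorial := by ring
    _ ≤ (Real.exp (-2) * m) ^ m / m.factorial := by gcongr
    _ = Real.exp (-2) ^ m * ((m : ℝ) ^ m / m.factorial) := by ring
    _ ≤ Real.exp (-2) ^ m * Real.exp m := by
        gcongr
        exact Real.pow_div_factorial_le_exp _ m.cast_nonneg _
    _ = Real.exp (-m) := by
        rw [← Real.exp_nat_mul, ← Real.exp_add]
        ring_nf

lemma rpow_half_add_le_rpow_mul_rpow_half {x p : ℝ} (hx : 0 < x) (hp : 1 / x ≤ p) (a : ℝ) :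
    x ^ (1 / 2 + a) ≤ x ^ (1 + a) * p ^ (1 / 2 : ℝ) := by
  calc x ^ (1 / 2 + a) = x ^ (1 + a) * (1 / x) ^ (1 / 2 : ℝ) := by
        rw [one_div x, Real.inv_rpow hx.le, ← Real.rpow_neg hx.le, ← Real.rpow_add hx]
        ring_nf
    _ ≤ x ^ (1 + a) * p ^ (1 / 2 : ℝ) := by gcongr

lemma rpow_mul_mul_le_rpow_mul_rpow_half {x p : ℝ} (hx : 0 < x) (hp₀ : 0 ≤ p) (hp₁ : p ≤ 1)
    (a : ℝ) : x ^ a * (x * p) ≤ x ^ (1 + a) * p ^ (1 / 2 : ℝ) := by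
  have hp : p ≤ p ^ (1 / 2 : ℝ) := by
    simpa using Real.rpow_le_rpow_of_exponent_ge_of_imp hp₀ hp₁
      (by norm_num : (1 / 2 : ℝ) ≤ 1) (by norm_num)
  calc x ^ a * (x * p) = x ^ (1 + a) * p := by rw [Real.rpow_add hx, Real.rpow_one]; ring
    _ ≤ x ^ (1 + a) * p ^ (1 / 2 : ℝ) := by gcongr

lemma eventually_const_mul_log_le_rpow (C : ℝ) {r : ℝ} (hr : 0 < r) :
    ∀ᶠ x : ℝ in atTop, C * Real.log x ≤ x ^ r := by
  filter_upwards [((isLittleO_log_rpow_atTop hr).const_mul_left C).bound one_pos,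
    eventually_ge_atTop 0] with x hx hx₀
  simpa [abs_of_nonneg (Real.rpow_nonneg hx₀ r)] using (le_abs_self _).trans hx

lemma eventually_const_mul_rpow_le_rpow (C : ℝ) {r s : ℝ} (hrs : r < s) :
    ∀ᶠ x : ℝ in atTop, C * x ^ r ≤ x ^ s := by
  filter_upwards [(tendsto_rpow_atTop (sub_pos.mpr hrs)).eventually_ge_atTop C,
    eventually_gt_atTop 0] with x hx hx₀
  calc C * x ^ r ≤ x ^ (s - r) * x ^ r := by gcongr
    _ = x ^ s := by rw [← Real.rpow_add hx₀, sub_add_cancel]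

lemma eventually_exp_neg_rpow_div_two_le {r ε : ℝ} (hr : 0 < r) (hε : 0 < ε) :
    ∀ᶠ x : ℝ in atTop, Real.exp (-(x ^ r / 2)) ≤ ε :=
  (Real.tendsto_exp_neg_atTop_nhds_zero.comp
    ((tendsto_rpow_atTop hr).atTop_div_const two_pos)).eventually_le_const hε

/-- The size `s = ⌈x ^ (1 / 2 + δ)⌉` balances the container condition `x log x = O(s ^ 2)` against
the cost `s log x` of choosing a sub-arc of that size. -/
lemma exists_nat_mul_log_le_sq_and_mul_log_le {x δ : ℝ} (hx : 1 ≤ x) (hδ : 9 ≤ x ^ δ)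
    (hlog : 20 * Real.log x ≤ x ^ δ) (hhalf : 2 * x ^ (1 / 2 + δ) ≤ x) :
    ∃ s : ℕ, s ≤ x ∧ 8 * x * Real.log x ≤ s ^ 2 ∧ s ≤ x ^ (1 / 2 + 2 * δ) ∧
      10 * (s * Real.log x) ≤ x ^ (1 / 2 + 2 * δ) := by
  have hx₀ : 0 < x := by linarith
  have hlog₀ : 0 ≤ Real.log x := Real.log_nonneg hx
  have hsq : (x ^ (1 / 2 + δ)) ^ 2 = x * (x ^ δ) ^ 2 := by
    rw [Real.rpow_add hx₀, mul_pow, ← Real.sqrt_eq_rpow, Real.sq_sqrt hx₀.le]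
  have hmul : x ^ (1 / 2 + 2 * δ) = x ^ (1 / 2 + δ) * x ^ δ := by
    rw [← Real.rpow_add hx₀]
    ring_nf
  have hpos : 0 < x ^ (1 / 2 + δ) := by positivity
  rw [hmul]
  generalize x ^ (1 / 2 + δ) = y at *
  generalize x ^ δ = z at *
  have hy : 1 ≤ y := by nlinarith
  have hle : y ≤ ⌈y⌉₊ := Nat.le_ceil y
  have hceil : (⌈y⌉₊ : ℝ) ≤ 2 * y := by linarith [Nat.ceil_lt_add_one hpos.le]
  refine ⟨⌈y⌉₊, hceil.trans hhalf, ?_, by nlinarith, ?_⟩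
  · calc 8 * x * Real.log x = x * (8 * Real.log x) := by ring
      _ ≤ x * z ^ 2 := by gcongr; nlinarith
      _ = y ^ 2 := hsq.symm
      _ ≤ (⌈y⌉₊ : ℝ) ^ 2 := by gcongr
  · calc 10 * (⌈y⌉₊ * Real.log x) ≤ 10 * (2 * y * Real.log x) := by gcongr
      _ = y * (20 * Real.log x) := by ring
      _ ≤ y * z := by gcongr

end Estimates

section ExpectedNumber

variable {F : Type*} [Field F] [Fintype F]

local notation "q" => Fintype.card F

lemma numArcs_le_pow_mul_choose {s m : ℕ} (hsm : s ≤ m) (hsq : s ≤ q)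
    (hlog : 8 * (q : ℝ) * Real.log q ≤ s ^ 2) :
    numArcs F m ≤ q ^ (5 * s) * (9 * q).choose m := by
  have hq : 2 ≤ q := Fintype.one_lt_card
  have hsq' : (s : ℝ) ≤ q := by exact_mod_cast hsq
  have hcond := one_sub_div_pow_mul_sq_le (by positivity) (by linarith) hlog
  calc numArcs F m ≤ (q ^ 2) ^ s * ((q ^ 2 + 1) ^ s * (8 * q + s).choose m) :=
        numArcs_le_mul_choose hsm hcond
    _ ≤ (q ^ 2) ^ s * ((q ^ 3) ^ s * (9 * q).choose m) := by
        gcongr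
        · nlinarith
        · omega
    _ = q ^ (5 * s) * (9 * q).choose m := by ring

lemma numArcs_mul_pow_le_exp_sub {s m : ℕ} {p : ℝ} (hp : 0 ≤ p) (hsm : s ≤ m) (hsq : s ≤ q)
    (hlog : 8 * (q : ℝ) * Real.log q ≤ s ^ 2) (hpm : 81 * (q * p) ≤ m) :
    numArcs F m * p ^ m ≤ Real.exp (5 * s * Real.log q - m) := by
  have hexp : Real.exp 2 ≤ 9 := by
    have := Real.exp_one_lt_three
    rw [show (2 : ℝ) = 1 + 1 by norm_num, Real.exp_add]
    nlinarith [Real.exp_pos 1]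
  have hchoose : (9 * q).choose m * p ^ m ≤ Real.exp (-m) := by
    refine choose_mul_pow_le_exp_neg hp (le_trans ?_ hpm)
    calc Real.exp 2 * ((9 * q : ℕ) * p) ≤ 9 * ((9 * q : ℕ) * p) := by gcongr
      _ = 81 * (q * p) := by push_cast; ring
  calc numArcs F m * p ^ m ≤ (q ^ (5 * s) * (9 * q).choose m : ℕ) * p ^ m := by
        gcongr
        exact numArcs_le_pow_mul_choose hsm hsq hlog
    _ = Real.exp (Real.log q) ^ (5 * s) * ((9 * q).choose m * p ^ m) := by
        rw [Real.exp_log (by exact_mod_cast Fintype.card_pos)]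
        push_cast
        ring
    _ ≤ Real.exp (Real.log q) ^ (5 * s) * Real.exp (-m) := by gcongr
    _ = Real.exp (5 * s * Real.log q - m) := by
        rw [← Real.exp_nat_mul, ← Real.exp_add]
        push_cast
        ring_nf

lemma numArcs_mul_pow_le_exp_neg_half {δ p : ℝ} {m : ℕ} (hδ : (9 : ℝ) ≤ q ^ δ)
    (hlog : 20 * Real.log q ≤ (q : ℝ) ^ δ) (hhalf : 2 * (q : ℝ) ^ (1 / 2 + δ) ≤ q)
    (hp₁ : p ≤ 1) (hp : 1 / (q : ℝ) ≤ p) (hm : (q : ℝ) ^ (1 + 2 * δ) * p ^ (1 / 2 : ℝ) ≤ m) :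
    numArcs F m * p ^ m ≤ Real.exp (-(m / 2)) := by
  have hq : (1 : ℝ) ≤ q := by exact_mod_cast Fintype.card_pos
  have hq₀ : (0 : ℝ) < q := by linarith
  have hp₀ : 0 ≤ p := le_trans (by positivity) hp
  obtain ⟨s, hsq, hs, hsm, hcost⟩ := exists_nat_mul_log_le_sq_and_mul_log_le hq hδ hlog hhalf
  have hm' : (q : ℝ) ^ (1 / 2 + 2 * δ) ≤ m :=
    (rpow_half_add_le_rpow_mul_rpow_half hq₀ hp _).trans hm
  have hpm : 81 * (q * p) ≤ m := by
    refine le_trans ?_ ((rpow_mul_mul_le_rpow_mul_rpow_half hq₀ hp₀ hp₁ (2 * δ)).trans hm)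
    gcongr
    rw [two_mul, Real.rpow_add hq₀]
    nlinarith
  refine (numArcs_mul_pow_le_exp_sub hp₀ (by exact_mod_cast hsm.trans hm')
    (by exact_mod_cast hsq) hs hpm).trans ?_
  gcongr
  linarith

end ExpectedNumber

section RandomSubset

variable {F : Type*} [Field F]

lemma exists_isArc_of_le_maxArc {P : Finset (F × F)} {m : ℕ} (h : m ≤ maxArc F P) :
    ∃ A ⊆ P, #A = m ∧ IsArc F A := by
  obtain ⟨B, hBP, hBcard, hB⟩ : maxArc F P ∈ {k | ∃ s ⊆ P, #s = k ∧ IsArc F s} := by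
    refine Nat.sSup_mem ⟨0, ∅, by simp, by simp, by simp [IsArc]⟩ ⟨#P, ?_⟩
    rintro k ⟨s, hs, rfl, -⟩
    exact card_le_card hs
  obtain ⟨A, hAB, hAcard⟩ := exists_subset_card_eq (hBcard ▸ h)
  exact ⟨A, hAB.trans hBP, hAcard, hB.mono (coe_subset.mpr hAB)⟩

variable [Fintype F] {p : ℝ≥0} {hp : p ≤ 1}

instance isProbabilityMeasure_randomMeasure : IsProbabilityMeasure (randomMeasure F p hp) := by
  unfold randomMeasure
  infer_instance

lemma randomMeasure_superset (A : Finset (F × F)) :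
    randomMeasure F p hp {Q | A ⊆ toSubset Q} = (p : ℝ≥0∞) ^ #A := by
  have hset : {Q : F × F → Bool | A ⊆ toSubset Q} = Set.pi A fun _ => {true} := by
    ext Q
    simp [subset_iff, toSubset]
  rw [hset, randomMeasure, ← Measure.infinitePi_eq_pi, Measure.infinitePi_pi _ (by simp),
    prod_const, PMF.toMeasure_apply_singleton _ _ (measurableSet_singleton _)]
  rfl

lemma randomMeasure_le_maxArc_le (m : ℕ) :
    randomMeasure F p hp {Q | m ≤ maxArc F (toSubset Q)} ≤ numArcs F m * (p : ℝ≥0∞) ^ m := by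
  classical
  let 𝓐 : Finset (Finset (F × F)) := {A | #A = m ∧ IsArc F A}
  calc randomMeasure F p hp {Q | m ≤ maxArc F (toSubset Q)}
      ≤ randomMeasure F p hp (⋃ A ∈ 𝓐, {Q | A ⊆ toSubset Q}) := by
        refine measure_mono fun Q hQ => ?_
        obtain ⟨A, hAQ, hA⟩ := exists_isArc_of_le_maxArc hQ
        exact Set.mem_biUnion (mem_filter.mpr ⟨mem_univ A, hA⟩) hAQ
    _ ≤ ∑ A ∈ 𝓐, randomMeasure F p hp {Q | A ⊆ toSubset Q} := measure_biUnion_finset_le _ _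
    _ = ∑ _ ∈ 𝓐, (p : ℝ≥0∞) ^ m :=
        sum_congr rfl fun A hA => by rw [randomMeasure_superset, (mem_filter.mp hA).2.1]
    _ = numArcs F m * (p : ℝ≥0∞) ^ m := by
        rw [sum_const, nsmul_eq_mul, numArcs_eq_card_filter]

lemma one_sub_le_randomMeasure_maxArc_le {B ε : ℝ} (hB : 0 ≤ B)
    (h : numArcs F (⌊B⌋₊ + 1) * (p : ℝ) ^ (⌊B⌋₊ + 1) ≤ ε) :
    1 - ENNReal.ofReal ε ≤ randomMeasure F p hp {Q | (maxArc F (toSubset Q) : ℝ) ≤ B} := by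
  set G := {Q : F × F → Bool | (maxArc F (toSubset Q) : ℝ) ≤ B}
  have hcompl : Gᶜ = {Q | ⌊B⌋₊ + 1 ≤ maxArc F (toSubset Q)} := by
    ext Q
    simp [G, Nat.floor_lt hB]
  have hbad : randomMeasure F p hp Gᶜ ≤ ENNReal.ofReal ε := by
    calc randomMeasure F p hp Gᶜ ≤ numArcs F (⌊B⌋₊ + 1) * (p : ℝ≥0∞) ^ (⌊B⌋₊ + 1) :=
          hcompl ▸ randomMeasure_le_maxArc_le _
      _ = ENNReal.ofReal (numArcs F (⌊B⌋₊ + 1) * (p : ℝ) ^ (⌊B⌋₊ + 1)) := by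
          rw [ENNReal.ofReal_mul (by positivity), ENNReal.ofReal_natCast,
            ENNReal.ofReal_pow p.coe_nonneg, ENNReal.ofReal_coe_nnreal]
      _ ≤ ENNReal.ofReal ε := ENNReal.ofReal_le_ofReal h
  rw [← compl_compl G, prob_compl_eq_one_sub (Set.toFinite _).measurableSet]
  gcongr

lemma one_sub_exp_le_randomMeasure_maxArc_le {δ : ℝ} (hδ : 9 ≤ (Fintype.card F : ℝ) ^ δ)
    (hlog : 20 * Real.log (Fintype.card F) ≤ (Fintype.card F : ℝ) ^ δ)
    (hhalf : 2 * (Fintype.card F : ℝ) ^ (1 / 2 + δ) ≤ Fintype.card F)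
    (hqp : 1 / (Fintype.card F : ℝ) ≤ p) :
    1 - ENNReal.ofReal (Real.exp (-((Fintype.card F : ℝ) ^ (1 / 2 + 2 * δ) / 2))) ≤
      randomMeasure F p hp {Q | (maxArc F (toSubset Q) : ℝ) ≤
        (Fintype.card F : ℝ) ^ (1 + 2 * δ) * (p : ℝ) ^ (1 / 2 : ℝ)} := by
  refine one_sub_le_randomMeasure_maxArc_le (by positivity) ?_
  set B := (Fintype.card F : ℝ) ^ (1 + 2 * δ) * (p : ℝ) ^ (1 / 2 : ℝ)
  have hB : B ≤ (⌊B⌋₊ + 1 : ℕ) := by exact_mod_cast (Nat.lt_floor_add_one B).le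
  have hq : (0 : ℝ) < Fintype.card F := by exact_mod_cast Fintype.card_pos
  refine (numArcs_mul_pow_le_exp_neg_half hδ hlog hhalf hp hqp hB).trans ?_
  gcongr
  exact (rpow_half_add_le_rpow_mul_rpow_half hq hqp (2 * δ)).trans hB

end RandomSubset

theorem random_arc_upper_large_p_general {δ ε : ℝ} (hδ : 0 < δ) (hε : 0 < ε) :
    ∃ q₀ : ℕ, ∀ (F : Type*) [Field F] [Fintype F], q₀ ≤ Fintype.card F →
      ∀ (p : ℝ≥0) (hp : p ≤ 1), 1 / (Fintype.card F : ℝ) ≤ p →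
      1 - ENNReal.ofReal ε ≤ randomMeasure F p hp
        {Q | (maxArc F (toSubset Q) : ℝ) ≤
          (Fintype.card F : ℝ) ^ (1 + 2 * δ) * (p : ℝ) ^ (1 / 2 : ℝ)} := by
  obtain ⟨η, hη, hηδ, hη₂⟩ : ∃ η : ℝ, 0 < η ∧ η ≤ δ ∧ 1 / 2 + η < 1 :=
    ⟨min δ (1 / 4), by positivity, min_le_left _ _, by linarith [min_le_right δ (1 / 4)]⟩
  have hlarge : ∀ᶠ x : ℝ in atTop, 9 ≤ x ^ η ∧ 20 * Real.log x ≤ x ^ η ∧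
      2 * x ^ (1 / 2 + η) ≤ x ^ (1 : ℝ) ∧ Real.exp (-(x ^ (1 / 2 + 2 * η) / 2)) ≤ ε :=
    ((tendsto_rpow_atTop hη).eventually_ge_atTop 9).and <|
      (eventually_const_mul_log_le_rpow 20 hη).and <|
      (eventually_const_mul_rpow_le_rpow 2 hη₂).and <|
      eventually_exp_neg_rpow_div_two_le (by positivity) hε
  obtain ⟨q₀, hq₀⟩ := eventually_atTop.mp (tendsto_natCast_atTop_atTop.eventually hlarge)
  refine ⟨q₀, fun F _ _ hF p hp hqp => ?_⟩
  obtain ⟨hη₉, hlog, hhalf, hexp⟩ := hq₀ _ hF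
  rw [Real.rpow_one] at hhalf
  refine (tsub_le_tsub_left (ENNReal.ofReal_le_ofReal hexp) 1).trans
    ((one_sub_exp_le_randomMeasure_maxArc_le hη₉ hlog hhalf hqp).trans (measure_mono ?_))
  have hq : (1 : ℝ) ≤ Fintype.card F := by exact_mod_cast Fintype.card_pos
  exact Set.ofPred_subset_ofPred.mpr fun Q hQ => hQ.trans (by gcongr)

theorem random_arc_upper_large_p :
    ∀ δ ε : ℝ, 0 < δ → 0 < ε → ∃ q₀ : ℕ,
      ∀ (F : Type) [Field F] [Fintype F], q₀ ≤ Fintype.card F →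
      ∀ (p : ℝ≥0) (hp : p ≤ 1),
      1 / (Fintype.card F : ℝ) ≤ (p : ℝ) →
      (p : ℝ) ≤ (Fintype.card F : ℝ) ^ (-(4 : ℝ) * δ) →
      1 - ENNReal.ofReal ε ≤
        randomMeasure F p hp
          {Q | (maxArc F (toSubset Q) : ℝ) ≤
            (Fintype.card F : ℝ) ^ ((1 : ℝ) + 2 * δ) * (p : ℝ) ^ ((1 : ℝ) / 2)} := by
  intro δ ε hδ hε
  obtain ⟨q₀, h⟩ := random_arc_upper_large_p_general hδ hε
  exact ⟨q₀, fun F _ _ hF p hp hqp _ => h F hF p hp hqp⟩
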